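/- For every (z,w) ∈ A, writing (z_n, w_n) = f^n(z,w), one has limsup_{n→∞} n·|z_n − w_n| < 1. -/

import Mathlib

open Filter Topology

/-- The restriction of the map `f(z,w) = (z(1-(z-w)), w(1+(z-w)))` to `ℝ² ⊂ ℂ²`
(`f` maps `ℝ²` into `ℝ²`). -/
noncomputable def fR : ℝ × ℝ → ℝ × ℝ :=
  fun p => (p.1 * (1 - (p.1 - p.2)), p.2 * (1 + (p.1 - p.2)))

/-- The triangle `A = {(z,w) ∈ ℝ² : z > 0, w > 0, z + w < 1}`. -/
def A : Set (ℝ × ℝ) := {p : ℝ × ℝ | 0 < p.1 ∧ 0 < p.2 ∧ p.1 + p.2 < 1}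

/-!
In the coordinates `s = z + w` and `d = z - w` the map reads `(s, d) ↦ (s - d², (1 - s) d)`, so `d`
decays geometrically as soon as `s` stays away from `0`. The product transforms by
`zw ↦ zw (1 - d²)`, and `s (1 - d²) ≥ s - d²` when `s ≤ 1`; hence `zw / (z + w)` never decreases
along an orbit in `A`. It is also a lower bound for `s`, so `|d|` contracts at each step by at least
the factor `1 - z₀ w₀ / (z₀ + w₀) < 1`, and `n |z_n - w_n|` tends to `0`.
-/

theorem fR_fst_add_snd (p : ℝ × ℝ) :
    (fR p).1 + (fR p).2 = p.1 + p.2 - (p.1 - p.2) ^ 2 := by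
  simp only [fR]
  ring

theorem fR_fst_sub_snd (p : ℝ × ℝ) :
    (fR p).1 - (fR p).2 = (1 - (p.1 + p.2)) * (p.1 - p.2) := by
  simp only [fR]
  ring

theorem fR_fst_mul_snd (p : ℝ × ℝ) :
    (fR p).1 * (fR p).2 = p.1 * p.2 * (1 - (p.1 - p.2) ^ 2) := by
  simp only [fR]
  ring

theorem mapsTo_fR_A : Set.MapsTo fR A A := by
  rintro p ⟨hz, hw, hs⟩
  have hsum : (fR p).1 + (fR p).2 < 1 := by
    rw [fR_fst_add_snd]
    linarith [sq_nonneg (p.1 - p.2)]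
  exact ⟨mul_pos hz (by linarith), mul_pos hw (by linarith), hsum⟩

/-- The parallel sum `zw / (z + w)` (half the harmonic mean) of the coordinates of `p = (z, w)`, a
Lyapunov function for `fR` on `A`. Division makes it `0` where `z + w = 0`. -/
noncomputable def parallelSum (p : ℝ × ℝ) : ℝ :=
  p.1 * p.2 / (p.1 + p.2)

theorem parallelSum_pos {p : ℝ × ℝ} (hz : 0 < p.1) (hw : 0 < p.2) : 0 < parallelSum p :=
  div_pos (mul_pos hz hw) (add_pos hz hw)

theorem parallelSum_le_add {p : ℝ × ℝ} (hz : 0 ≤ p.1) (hw : 0 ≤ p.2) :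
    parallelSum p ≤ p.1 + p.2 := by
  have hs : 0 ≤ p.1 + p.2 := add_nonneg hz hw
  refine div_le_of_le_mul₀ hs hs ?_
  gcongr <;> linarith

theorem parallelSum_le_parallelSum_fR {p : ℝ × ℝ} (hp : p ∈ A) :
    parallelSum p ≤ parallelSum (fR p) := by
  obtain ⟨hz, hw, hs⟩ := hp
  obtain ⟨hz', hw', -⟩ := mapsTo_fR_A ⟨hz, hw, hs⟩
  have hsum : p.1 + p.2 - (p.1 - p.2) ^ 2 ≤ (1 - (p.1 - p.2) ^ 2) * (p.1 + p.2) := by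
    linarith [mul_le_of_le_one_right (sq_nonneg (p.1 - p.2)) hs.le]
  rw [parallelSum, parallelSum, div_le_div_iff₀ (add_pos hz hw) (add_pos hz' hw'),
    fR_fst_add_snd, fR_fst_mul_snd, mul_assoc (p.1 * p.2)]
  gcongr

theorem monotone_parallelSum_iterate_fR {p : ℝ × ℝ} (hp : p ∈ A) :
    Monotone fun n : ℕ => parallelSum (fR^[n] p) := by
  refine monotone_nat_of_le_succ fun n => ?_
  rw [Function.iterate_succ_apply']
  exact parallelSum_le_parallelSum_fR (mapsTo_fR_A.iterate n hp)

theorem parallelSum_le_iterate_fR_add {p : ℝ × ℝ} (hp : p ∈ A) (n : ℕ) :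
    parallelSum p ≤ (fR^[n] p).1 + (fR^[n] p).2 := by
  obtain ⟨hz, hw, -⟩ := mapsTo_fR_A.iterate n hp
  exact (monotone_parallelSum_iterate_fR hp n.zero_le).trans (parallelSum_le_add hz.le hw.le)

theorem abs_iterate_fR_sub_le {p : ℝ × ℝ} (hp : p ∈ A) (n : ℕ) :
    |(fR^[n] p).1 - (fR^[n] p).2| ≤ (1 - parallelSum p) ^ n * |p.1 - p.2| := by
  have hr : 0 ≤ 1 - parallelSum p := by
    linarith [parallelSum_le_add hp.1.le hp.2.1.le, hp.2.2]
  refine le_geom (u := fun k => |(fR^[k] p).1 - (fR^[k] p).2|) hr n fun k _ => ?_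
  have hs : 0 ≤ 1 - ((fR^[k] p).1 + (fR^[k] p).2) :=
    sub_nonneg.2 (mapsTo_fR_A.iterate k hp).2.2.le
  simp only [Function.iterate_succ_apply', fR_fst_sub_snd, abs_mul, abs_of_nonneg hs]
  gcongr
  exact parallelSum_le_iterate_fR_add hp k

theorem limsup_rate_lt_one_general {p : ℝ × ℝ} (hp : p ∈ A) :
    Tendsto (fun n : ℕ => (n : ℝ) * |(fR^[n] p).1 - (fR^[n] p).2|) atTop (𝓝 0) := by
  obtain ⟨hz, hw, hs⟩ := id hp
  have hgeom : Tendsto (fun n : ℕ => (n : ℝ) * (1 - parallelSum p) ^ n * |p.1 - p.2|)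
      atTop (𝓝 0) := by
    simpa only [zero_mul] using (tendsto_self_mul_const_pow_of_lt_one
      (by linarith [parallelSum_le_add hz.le hw.le])
      (by linarith [parallelSum_pos hz hw])).mul_const |p.1 - p.2|
  refine squeeze_zero (fun n => by positivity) (fun n => ?_) hgeom
  rw [mul_assoc]
  gcongr
  exact abs_iterate_fR_sub_le hp n

/-- For every `(z,w) ∈ A`, `limsup_{n→∞} n·|z_n - w_n| < 1`. -/
theorem limsup_rate_lt_one :
    ∀ p ∈ A, Filter.limsup (fun n : ℕ => (n : ℝ) * |(fR^[n] p).1 - (fR^[n] p).2|) atTop < 1 := by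
  intro p hp
  exact (limsup_rate_lt_one_general hp).limsup_eq.trans_lt one_pos
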